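/- Let (𝒞, J) be a finitely complete category endowed with a Grothendieck topology, let 𝔉 be a filter on 𝒞, let C be an object of 𝒞, and let p : 1 → C be a point of C. Assume that for any two 𝔊-neighborhoods V and W of p there exists a 𝔊-neighborhood U of p with U ⊆ V ∩ W. Then p is a cluster point of 𝔉(C) if and only if there exists a filter 𝔊 on 𝒞 finer than 𝔉 such that 𝔊(C) converges to p. -/

import Mathlib

open CategoryTheory Limits

universe w v u

/-- A filter on a category: assigns to each object a collection of sieves that is
upward closed, closed under finite intersections, and omits the empty sieve. -/
structure CatFilter (𝒞 : Type u) [Category.{v} 𝒞] where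
  F : ∀ X : 𝒞, Set (Sieve X)
  /-- (F1) upward closure -/
  mono : ∀ {X : 𝒞} {S R : Sieve X}, S ∈ F X → S ≤ R → R ∈ F X
  /-- (F2) every finite intersection of members is a member -/
  finInter : ∀ {X : 𝒞} (T : Finset (Sieve X)), (∀ S ∈ T, S ∈ F X) → T.inf id ∈ F X
  /-- (F3) the empty sieve is not a member -/
  bot_not_mem : ∀ X : 𝒞, ⊥ ∉ F X

/-- A 𝔊-neighborhood of a point `p : 1 ⟶ X` with respect to a Grothendieck topology `J`:
a covering sieve containing a morphism through which `p` factors. -/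
def IsGNbhd {𝒞 : Type u} [Category.{v} 𝒞] [Limits.HasFiniteLimits 𝒞]
    (J : GrothendieckTopology 𝒞) {X : 𝒞} (p : ⊤_ 𝒞 ⟶ X) (V : Sieve X) : Prop :=
  V ∈ J X ∧ ∃ (D : 𝒞) (φ : D ⟶ X), V.arrows φ ∧ ∃ q : ⊤_ 𝒞 ⟶ D, q ≫ φ = p

/-- A cover-neighborhood of a point `p`: a sieve containing some 𝔊-neighborhood of `p`. -/
def IsCoverNbhd {𝒞 : Type u} [Category.{v} 𝒞] [Limits.HasFiniteLimits 𝒞]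
    (J : GrothendieckTopology 𝒞) {X : 𝒞} (p : ⊤_ 𝒞 ⟶ X) (S : Sieve X) : Prop :=
  ∃ V : Sieve X, IsGNbhd J p V ∧ V ≤ S

/-- Two sieves on the same object meet if some morphism belongs to both. -/
def Meets {𝒞 : Type u} [Category.{v} 𝒞] {X : 𝒞} (S T : Sieve X) : Prop :=
  ∃ (D : 𝒞) (f : D ⟶ X), S.arrows f ∧ T.arrows f

namespace CatFilter

variable {𝒞 : Type u} [Category.{v} 𝒞]

lemma top_mem (𝔉 : CatFilter 𝒞) (X : 𝒞) : ⊤ ∈ 𝔉.F X := by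
  simpa using 𝔉.finInter (X := X) ∅ (by simp)

lemma inf_mem (𝔉 : CatFilter 𝒞) {X : 𝒞} {S T : Sieve X} (hS : S ∈ 𝔉.F X) (hT : T ∈ 𝔉.F X) :
    S ⊓ T ∈ 𝔉.F X := by
  classical
  simpa using 𝔉.finInter {S, T} (by simp [hS, hT])

/-- Build a filter from closure under binary intersections and membership of the maximal sieve. -/
def ofInf (F : ∀ X : 𝒞, Set (Sieve X))
    (mono : ∀ {X : 𝒞} {S R : Sieve X}, S ∈ F X → S ≤ R → R ∈ F X)
    (top_mem : ∀ X : 𝒞, ⊤ ∈ F X)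
    (inf_mem : ∀ {X : 𝒞} {S T : Sieve X}, S ∈ F X → T ∈ F X → S ⊓ T ∈ F X)
    (bot_not_mem : ∀ X : 𝒞, ⊥ ∉ F X) : CatFilter 𝒞 where
  F := F
  mono := mono
  finInter _ hT := Finset.inf_induction (top_mem _) (fun _ hS _ hT ↦ inf_mem hS hT) hT
  bot_not_mem := bot_not_mem

/-- The filter generated by `𝔉` and a filter base `B` whose members meet those of `𝔉`. -/
def adjoin (𝔉 : CatFilter 𝒞) (B : ∀ X : 𝒞, Set (Sieve X)) (nonempty : ∀ X, (B X).Nonempty)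
    (directed : ∀ X, ∀ V ∈ B X, ∀ W ∈ B X, ∃ U ∈ B X, U ≤ V ⊓ W)
    (meets : ∀ X, ∀ V ∈ B X, ∀ A ∈ 𝔉.F X, Meets V A) : CatFilter 𝒞 :=
  ofInf (fun X ↦ {R | ∃ V ∈ B X, ∃ A ∈ 𝔉.F X, V ⊓ A ≤ R})
    (fun ⟨V, hV, A, hA, h⟩ hR ↦ ⟨V, hV, A, hA, h.trans hR⟩)
    (fun X ↦ (nonempty X).imp fun _ hV ↦ ⟨hV, ⊤, 𝔉.top_mem X, le_top⟩)
    (fun {X _ _} ⟨V, hV, A, hA, h⟩ ⟨W, hW, A', hA', h'⟩ ↦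
      let ⟨U, hU, hUVW⟩ := directed X V hV W hW
      ⟨U, hU, A ⊓ A', 𝔉.inf_mem hA hA', le_inf
        ((inf_le_inf (hUVW.trans inf_le_left) inf_le_left).trans h)
        ((inf_le_inf (hUVW.trans inf_le_right) inf_le_right).trans h')⟩)
    (fun X ⟨V, hV, A, hA, h⟩ ↦
      let ⟨_, f, hf, hf'⟩ := meets X V hV A hA
      h f ⟨hf, hf'⟩)

/-- Members of a filter are nonempty sieves. -/
lemma exists_arrow (𝔉 : CatFilter 𝒞) {X : 𝒞} {S : Sieve X} (hS : S ∈ 𝔉.F X) :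
    ∃ (D : 𝒞) (f : D ⟶ X), S.arrows f := by
  by_contra! h
  exact 𝔉.bot_not_mem X (𝔉.mono hS fun D f hf ↦ (h D f hf).elim)

end CatFilter

lemma isGNbhd_top {𝒞 : Type u} [Category.{v} 𝒞] [Limits.HasFiniteLimits 𝒞]
    (J : GrothendieckTopology 𝒞) {X : 𝒞} (p : ⊤_ 𝒞 ⟶ X) : IsGNbhd J p ⊤ :=
  ⟨J.top_mem X, X, 𝟙 X, trivial, p, Category.comp_id p⟩

/-- A point is a cluster point of 𝔉(C) iff some filter finer than 𝔉 converges to it,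
assuming the 𝔊-neighborhoods of the point are downward directed. -/
theorem cluster_point_iff_exists_finer_convergent
    {𝒞 : Type u} [Category.{v} 𝒞] [Limits.HasFiniteLimits 𝒞]
    (J : GrothendieckTopology 𝒞) (𝔉 : CatFilter 𝒞) (C : 𝒞) (p : ⊤_ 𝒞 ⟶ C)
    (hdir : ∀ V W : Sieve C, IsGNbhd J p V → IsGNbhd J p W →
      ∃ U : Sieve C, IsGNbhd J p U ∧ U ≤ V ⊓ W) :
    (∀ A ∈ 𝔉.F C, ∀ S : Sieve C, IsCoverNbhd J p S → Meets S A) ↔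
    ∃ 𝔊 : CatFilter 𝒞, (∀ X : 𝒞, 𝔉.F X ⊆ 𝔊.F X) ∧
      (∀ S : Sieve C, IsCoverNbhd J p S → S ∈ 𝔊.F C) := by
  constructor
  · intro h
    let B (X : 𝒞) : Set (Sieve X) := {V | ∀ e : C = X, IsGNbhd J (p ≫ eqToHom e) V} ∩
      {V | C ≠ X → V = ⊤}
    have mem_B (V : Sieve C) : V ∈ B C ↔ IsGNbhd J p V := by simp [B]
    have top_mem_B (X : 𝒞) : ⊤ ∈ B X := ⟨fun _ ↦ isGNbhd_top J _, fun _ ↦ rfl⟩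
    refine ⟨𝔉.adjoin B (fun X ↦ ⟨⊤, top_mem_B X⟩) ?_ ?_, ?_, ?_⟩
    · intro X V hV W hW
      by_cases e : C = X
      · subst e
        simp only [mem_B] at *
        exact hdir V W hV hW
      · exact ⟨⊤, top_mem_B X, by simp [hV.2 e, hW.2 e]⟩
    · intro X V hV A hA
      by_cases e : C = X
      · subst e
        exact h A hA V ⟨V, (mem_B V).1 hV, le_rfl⟩
      · obtain ⟨D, f, hf⟩ := 𝔉.exists_arrow hA
        exact ⟨D, f, by simp [hV.2 e], hf⟩
    · exact fun X A hA ↦ ⟨⊤, top_mem_B X, A, hA, inf_le_right⟩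
    · exact fun S ⟨V, hV, hVS⟩ ↦
        ⟨V, (mem_B V).2 hV, ⊤, 𝔉.top_mem C, inf_le_left.trans hVS⟩
  · rintro ⟨𝔊, hle, hconv⟩ A hA S hS
    exact 𝔊.exists_arrow (𝔊.inf_mem (hconv S hS) (hle C hA))
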